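/- Let 𝕜 be ℝ or ℂ, let Ω ⊆ 𝕜ⁿ be open, and let X, Y : Ω → 𝕜ⁿ be vector fields that are C¹ over 𝕜 (for 𝕜 = ℂ this means holomorphic with continuous derivative). Let f : Ω → 𝕜 be continuous with DX(p)(Y(p)) − DY(p)(X(p)) = f(p) • X(p) for all p ∈ Ω (Y tracks X). Let I ⊆ ℝ be an open interval and γ : I → Ω an integral curve of Y, i.e. γ has derivative Y(γ(t)) at every t ∈ I. If for some t₀ ∈ I the vectors X(γ(t₀)) and Y(γ(t₀)) are linearly dependent over 𝕜, then for every t ∈ I the vectors X(γ(t)) and Y(γ(t)) are linearly dependent over 𝕜. -/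

import Mathlib

open Set

/-!
Write `A t = DY(γ t)` for the linearization of `Y` along the integral curve `γ`. If
`[Y, X] = f • X`, then `x t = X (γ t)` solves `x' = A t x + f (γ t) • x`, so multiplying `x` by a
nowhere vanishing scalar solution of `u' = -f (γ t) u` turns it into a solution of the variational
equation `z' = A t z`. Since `Y` tracks itself with `f = 0`, the same applies to `Y (γ t)`. A linear
relation between solutions of the variational equation that holds at one time holds at all times,
by uniqueness of the zero solution, and the scalar factors do not affect linear dependence.
-/

open VectorField

section LinearODE

variable {𝕜 E ι : Type*} [NormedAddCommGroup E] [NormedSpace ℝ E] {I : Set ℝ} {s t : ℝ}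

theorem eq_zero_of_hasDerivAt_clm [NontriviallyNormedField 𝕜] [NormedSpace 𝕜 E]
    (hI : I.OrdConnected) {A : ℝ → E →L[𝕜] E} (hA : ContinuousOn A I) {z : ℝ → E}
    (hz : ∀ t ∈ I, HasDerivAt z (A t (z t)) t) (hs : s ∈ I) (ht : t ∈ I) (hzs : z s = 0) :
    z t = 0 := by
  have hst : uIcc s t ⊆ I := hI.uIcc_subset hs ht
  obtain ⟨C, hC⟩ := isCompact_uIcc.exists_bound_of_continuousOn (hA.mono hst)
  have hLip : ∀ r ∈ uIcc s t, LipschitzOnWith C.toNNReal (A r) univ := fun r hr ↦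
    ((A r).lipschitz.weaken (NNReal.le_toNNReal_of_coe_le (hC r hr))).lipschitzOnWith
  have hzc : ContinuousOn z (uIcc s t) := HasDerivAt.continuousOn fun r hr ↦ hz r (hst hr)
  have hzero (r : ℝ) : HasDerivAt (0 : ℝ → E) (A r 0) r := by
    simpa only [map_zero] using hasDerivAt_zero r (F := E)
  rcases le_total s t with h | h
  · rw [uIcc_of_le h] at hst hLip hzc
    exact ODE_solution_unique_of_mem_Icc_right
      (fun r hr ↦ hLip r (Ico_subset_Icc_self hr)) hzc
      (fun r hr ↦ (hz r (hst (Ico_subset_Icc_self hr))).hasDerivWithinAt) (fun _ _ ↦ mem_univ _)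
      continuousOn_const (fun r _ ↦ (hzero r).hasDerivWithinAt) (fun _ _ ↦ mem_univ _)
      hzs (right_mem_Icc.2 h)
  · rw [uIcc_of_ge h] at hst hLip hzc
    exact ODE_solution_unique_of_mem_Icc_left
      (fun r hr ↦ hLip r (Ioc_subset_Icc_self hr)) hzc
      (fun r hr ↦ (hz r (hst (Ioc_subset_Icc_self hr))).hasDerivWithinAt) (fun _ _ ↦ mem_univ _)
      continuousOn_const (fun r _ ↦ (hzero r).hasDerivWithinAt) (fun _ _ ↦ mem_univ _)
      hzs (left_mem_Icc.2 h)

theorem linearIndependent_of_hasDerivAt_clm [NontriviallyNormedField 𝕜] [NormedSpace 𝕜 E]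
    [SMulCommClass ℝ 𝕜 E] (hI : I.OrdConnected) {A : ℝ → E →L[𝕜] E} (hA : ContinuousOn A I)
    {x : ι → ℝ → E} (hx : ∀ i, ∀ t ∈ I, HasDerivAt (x i) (A t (x i t)) t)
    (hs : s ∈ I) (ht : t ∈ I) (hli : LinearIndependent 𝕜 fun i ↦ x i s) :
    LinearIndependent 𝕜 fun i ↦ x i t := by
  rw [linearIndependent_iff'] at hli ⊢
  intro J c hc
  have hsum : ∀ r ∈ I,
      HasDerivAt (fun r ↦ ∑ i ∈ J, c i • x i r) (A r (∑ i ∈ J, c i • x i r)) r := by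
    intro r hr
    simp only [map_sum, map_smul]
    exact HasDerivAt.fun_sum fun i _ ↦ (hx i r hr).const_smul (c i)
  exact hli J c (eq_zero_of_hasDerivAt_clm hI hA hsum ht hs hc)

theorem exists_units_hasDerivAt_mul {R : Type*} [NormedCommRing R] [NormedAlgebra ℝ R]
    [CompleteSpace R] (hIo : IsOpen I) (hI : I.OrdConnected) {g : ℝ → R} (hg : ContinuousOn g I) :
    ∃ u : ℝ → Rˣ, ∀ t ∈ I, HasDerivAt (fun t ↦ (u t : R)) (g t * u t) t := by
  rcases I.eq_empty_or_nonempty with rfl | ⟨a, ha⟩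
  · exact ⟨1, fun t ht ↦ ht.elim⟩
  let +nondep : NormedAlgebra ℚ R := .restrictScalars ℚ ℝ R
  refine ⟨fun t ↦ (NormedSpace.isUnit_exp (∫ r in a..t, g r)).unit, fun t ht ↦ ?_⟩
  have hint : HasDerivAt (fun t ↦ ∫ r in a..t, g r) (g t) t :=
    intervalIntegral.integral_hasDerivAt_right
      (hg.mono (hI.uIcc_subset ha ht)).intervalIntegrable
      (hg.stronglyMeasurableAtFilter hIo t ht) (hg.continuousAt (hIo.mem_nhds ht))
  simpa [mul_comm, Function.comp_def] using (hasFDerivAt_exp (𝕂 := ℝ)).comp_hasDerivAt t hint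

theorem linearIndependent_of_hasDerivAt_clm_add_smul [RCLike 𝕜] [NormedSpace 𝕜 E]
    [IsScalarTower ℝ 𝕜 E] (hIo : IsOpen I) (hI : I.OrdConnected)
    {A : ℝ → E →L[𝕜] E} (hA : ContinuousOn A I)
    {g : ι → ℝ → 𝕜} (hg : ∀ i, ContinuousOn (g i) I)
    {x : ι → ℝ → E} (hx : ∀ i, ∀ t ∈ I, HasDerivAt (x i) (A t (x i t) + g i t • x i t) t)
    (hs : s ∈ I) (ht : t ∈ I) (hli : LinearIndependent 𝕜 fun i ↦ x i s) :
    LinearIndependent 𝕜 fun i ↦ x i t := by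
  choose u hu using fun i ↦ exists_units_hasDerivAt_mul hIo hI (hg i).neg
  have hux : ∀ i, ∀ r ∈ I, HasDerivAt (fun r ↦ u i r • x i r) (A r (u i r • x i r)) r := by
    intro i r hr
    refine ((hu i r hr).smul (hx i r hr)).congr_deriv ?_
    simp only [Units.smul_def, map_smul, Pi.neg_apply]
    module
  have hlis : LinearIndependent 𝕜 fun i ↦ u i s • x i s := hli.units_smul fun i ↦ u i s
  exact (LinearIndependent.units_smul_iff _ fun i ↦ u i t).1
    (linearIndependent_of_hasDerivAt_clm hI hA hux hs ht hlis)

end LinearODE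

section Tracking

variable {𝕜 E ι : Type*} [RCLike 𝕜] [NormedAddCommGroup E] [NormedSpace 𝕜 E] {Ω : Set E}

variable (𝕜) in
/-- `TracksOn 𝕜 Y X Ω` says that the vector field `Y` tracks the vector field `X` on `Ω`: the Lie
bracket `[Y, X]` is `f • X` for some scalar function `f` continuous on `Ω`. -/
def TracksOn (Y X : E → E) (Ω : Set E) : Prop :=
  ∃ f : E → 𝕜, ContinuousOn f Ω ∧ ∀ p ∈ Ω, lieBracket 𝕜 Y X p = f p • X p

theorem TracksOn.refl (Y : E → E) (Ω : Set E) : TracksOn 𝕜 Y Y Ω :=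
  ⟨0, continuousOn_const, fun p _ ↦ by simp⟩

variable [NormedSpace ℝ E] [IsScalarTower ℝ 𝕜 E] {Y : E → E} {I : Set ℝ} {γ : ℝ → E} {s t : ℝ}

theorem hasDerivAt_comp_integralCurve {X : E → E} (hX : DifferentiableAt 𝕜 X (γ t))
    (hγ : HasDerivAt γ (Y (γ t)) t) :
    HasDerivAt (X ∘ γ) (fderiv 𝕜 Y (γ t) (X (γ t)) + lieBracket 𝕜 Y X (γ t)) t := by
  rw [lieBracket_eq, add_sub_cancel]
  exact (hX.hasFDerivAt.restrictScalars ℝ).comp_hasDerivAt t hγ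

theorem linearIndependent_of_tracksOn {X : ι → E → E} (hΩ : IsOpen Ω)
    (hX : ∀ i, DifferentiableOn 𝕜 (X i) Ω) (hY : ContDiffOn 𝕜 1 Y Ω)
    (htrack : ∀ i, TracksOn 𝕜 Y (X i) Ω) (hIo : IsOpen I) (hI : I.OrdConnected)
    (hγΩ : MapsTo γ I Ω) (hγ : ∀ t ∈ I, HasDerivAt γ (Y (γ t)) t) (hs : s ∈ I) (ht : t ∈ I)
    (hli : LinearIndependent 𝕜 fun i ↦ X i (γ s)) :
    LinearIndependent 𝕜 fun i ↦ X i (γ t) := by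
  choose f hf hbracket using htrack
  have hγc : ContinuousOn γ I := HasDerivAt.continuousOn hγ
  have hDY : ContinuousOn (fun t ↦ fderiv 𝕜 Y (γ t)) I :=
    (hY.continuousOn_fderiv_of_isOpen hΩ le_rfl).comp hγc hγΩ
  refine linearIndependent_of_hasDerivAt_clm_add_smul (x := fun i ↦ X i ∘ γ) hIo hI hDY
    (fun i ↦ (hf i).comp hγc hγΩ) (fun i r hr ↦ ?_) hs ht hli
  have hXr : DifferentiableAt 𝕜 (X i) (γ r) :=
    (hX i).differentiableAt (hΩ.mem_nhds (hγΩ hr))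
  simpa only [Function.comp_apply, hbracket i _ (hγΩ hr)] using
    hasDerivAt_comp_integralCurve hXr (hγ r hr)

theorem dependency_invariant_of_tracking_general {X : E → E} (hΩ : IsOpen Ω)
    (hX : DifferentiableOn 𝕜 X Ω) (hY : ContDiffOn 𝕜 1 Y Ω) (htrack : TracksOn 𝕜 Y X Ω)
    (hIo : IsOpen I) (hI : I.OrdConnected) (hγΩ : MapsTo γ I Ω)
    (hγ : ∀ t ∈ I, HasDerivAt γ (Y (γ t)) t) (hs : s ∈ I) (ht : t ∈ I)
    (hdep : ¬ LinearIndependent 𝕜 ![X (γ s), Y (γ s)]) :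
    ¬ LinearIndependent 𝕜 ![X (γ t), Y (γ t)] := by
  have heval (p : E) : (fun i ↦ ![X, Y] i p) = ![X p, Y p] := by
    ext i; fin_cases i <;> rfl
  rw [← heval] at hdep ⊢
  exact mt (linearIndependent_of_tracksOn hΩ
    (Fin.forall_fin_two.2 ⟨hX, hY.differentiableOn one_ne_zero⟩) hY
    (Fin.forall_fin_two.2 ⟨htrack, TracksOn.refl Y Ω⟩) hIo hI hγΩ hγ ht hs) hdep

end Tracking

/-- **Hirsch, Proposition 2.3, second assertion (local form).**
If `Y` tracks `X`, the dependency set `Dep_𝕜(X, Y)` is invariant under the flow of `Y`: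
along an integral curve of `Y`, if `X` and `Y` are linearly dependent at one time,
they are linearly dependent at every time. -/
theorem dependency_invariant_of_tracking
    (𝕜 : Type*) [RCLike 𝕜]
    (n : ℕ) (Ω : Set (EuclideanSpace 𝕜 (Fin n))) (hΩ : IsOpen Ω)
    (X Y : EuclideanSpace 𝕜 (Fin n) → EuclideanSpace 𝕜 (Fin n))
    (hX : ContDiffOn 𝕜 1 X Ω) (hY : ContDiffOn 𝕜 1 Y Ω)
    (f : EuclideanSpace 𝕜 (Fin n) → 𝕜) (hf : ContinuousOn f Ω)
    (htrack : ∀ p ∈ Ω, fderiv 𝕜 X p (Y p) - fderiv 𝕜 Y p (X p) = f p • X p)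
    (I : Set ℝ) (hIopen : IsOpen I) (hIinterval : I.OrdConnected)
    (γ : ℝ → EuclideanSpace 𝕜 (Fin n)) (hγΩ : ∀ t ∈ I, γ t ∈ Ω)
    (hγ : ∀ t ∈ I, HasDerivAt γ (Y (γ t)) t)
    (t₀ : ℝ) (ht₀ : t₀ ∈ I)
    (hdep : ¬ LinearIndependent 𝕜 ![X (γ t₀), Y (γ t₀)]) :
    ∀ t ∈ I, ¬ LinearIndependent 𝕜 ![X (γ t), Y (γ t)] := fun _ ht ↦
  dependency_invariant_of_tracking_general hΩ (hX.differentiableOn one_ne_zero) hY ⟨f, hf, htrack⟩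
    hIopen hIinterval hγΩ hγ ht₀ ht hdep
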